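/- arXiv:1410.1212 — 2 statements merged into one kernel-verified Lean document; each statement's English description precedes it below -/
import Mathlib

section
/- (Main theorem.) Let n, m ∈ ℕ with m ≥ 2^{n+1} − 1. Then 2^{p(n,m)}·β(n, m) is an integer, where p(n, m) = 2m − 2^{n+2} + 4 − s(n, m); equivalently, if β(n, m) ≠ 0 then −ν(β(n, m)) ≤ 2m − 2^{n+2} + 4 − s(n, m), where ν is the 2-adic valuation on ℚ. -/
/-- The base-2 sum-of-digits function of degree `n`: the sum of the binary
digits of `m` at positions `≥ n`, i.e. the binary digit sum of `⌊m / 2^n⌋`. -/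
def s (n m : ℕ) : ℕ := (Nat.digits 2 (m / 2 ^ n)).sum

/-- `p(n, m) = 2m - 2^(n+2) + 4 - s(n, m)`, as an integer. -/
def p (n m : ℕ) : ℤ := 2 * (m : ℤ) - 2 ^ (n + 2) + 4 - (s n m : ℤ)

/-!
The claim `β(n, m) ∈ 2^(-p(n, m)) ℤ` is proved for all `m ≥ 1` by strong induction on `m` and, for
fixed `m`, by descending induction on `n`, starting from `n` so large that `β(n, m) = 0`. The factor
`1/2` in the recursion costs one power of `2`, so each of the three terms in the bracket must lie in
`2^(1 - p(n, m)) ℤ`. For the two linear terms this is a strict inequality between values of `p`,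
coming from the fact that a carry changes the digit sum by at most one. The convolution is invariant
under `k ↦ m - k`: off the fixed point `m / 2` the terms come in equal pairs, which gains a factor
`2` over the superadditivity of `p`, and at the fixed point superadditivity is strict.
-/

theorem ceilDiv_mul_eq_ceilDiv_ceilDiv {α : Type*} [Semiring α] [PartialOrder α]
    [IsStrictOrderedRing α] [CeilDiv α α] {a b : α} (ha : 0 < a) (hb : 0 < b) (x : α) :
    x ⌈/⌉ (a * b) = x ⌈/⌉ a ⌈/⌉ b :=
  eq_of_forall_ge_iff fun y ↦ by
    rw [ceilDiv_le_iff_le_mul (mul_pos ha hb), ceilDiv_le_iff_le_mul hb,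
      ceilDiv_le_iff_le_mul ha, mul_assoc]

section DigitSum

variable {b : ℕ}

theorem sum_digits_eq_mod_add_div (hb : 1 < b) (x : ℕ) :
    (b.digits x).sum = x % b + (b.digits (x / b)).sum := by
  rcases x.eq_zero_or_pos with rfl | hx
  · simp
  · rw [Nat.digits_def' hb hx, List.sum_cons]

theorem sum_digits_add_le (hb : 1 < b) (x y : ℕ) :
    (b.digits (x + y)).sum ≤ (b.digits x).sum + (b.digits y).sum := by
  induction h : x + y using Nat.strong_induction_on generalizing x y with
  | _ z ih =>
    subst h
    rcases (x + y).eq_zero_or_pos with h0 | hpos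
    · simp [h0]
    have hlt := Nat.div_lt_self hpos hb
    rw [sum_digits_eq_mod_add_div hb (x + y), sum_digits_eq_mod_add_div hb x,
      sum_digits_eq_mod_add_div hb y]
    rcases lt_or_ge (x % b + y % b) b with no_carry | carry
    · rw [Nat.add_div_eq_of_add_mod_lt no_carry] at hlt ⊢
      rw [Nat.add_mod_of_add_mod_lt no_carry]
      have := ih _ hlt (x / b) (y / b) rfl
      lia
    · have hmod := Nat.add_mod_add_of_le_add_mod carry
      rw [Nat.add_div_eq_of_le_mod_add_mod carry (by lia)] at hlt ⊢
      have hcarry := ih _ hlt (x / b + y / b) 1 rfl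
      have hdiv := ih _ (by lia) (x / b) (y / b) rfl
      have hone := Nat.digit_sum_le b 1
      lia

theorem sum_digits_succ_le (hb : 1 < b) (x : ℕ) :
    (b.digits (x + 1)).sum ≤ (b.digits x).sum + 1 :=
  (sum_digits_add_le hb x 1).trans (Nat.add_le_add_left (Nat.digit_sum_le b 1) _)

theorem sum_digits_pos (b : ℕ) {x : ℕ} (hx : x ≠ 0) : 0 < (b.digits x).sum :=
  (Nat.pos_of_ne_zero (Nat.getLast_digit_ne_zero b hx)).trans_le
    (List.le_sum_of_mem (List.getLast_mem _))

theorem sum_digits_ceilDiv_le (hb : 1 < b) (x : ℕ) :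
    (b.digits (x ⌈/⌉ b)).sum ≤ (b.digits x).sum := by
  have hpred : b - 1 < b := by lia
  have hsucc := sum_digits_succ_le hb (x / b)
  rw [Nat.ceilDiv_eq_add_pred_div, Nat.add_sub_assoc hb.le, Nat.add_div (by lia),
    Nat.div_eq_of_lt hpred, Nat.mod_eq_of_lt hpred, sum_digits_eq_mod_add_div hb x]
  split_ifs <;> lia

theorem sum_digits_ceilDiv_pow_le (hb : 1 < b) (n x : ℕ) :
    (b.digits (x ⌈/⌉ b ^ n)).sum ≤ (b.digits x).sum := by
  induction n with
  | zero => simp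
  | succ n ih =>
    rw [pow_succ, ceilDiv_mul_eq_ceilDiv_ceilDiv (by positivity) (by lia)]
    exact (sum_digits_ceilDiv_le hb _).trans ih

end DigitSum

theorem two_le_two_pow_succ (n : ℕ) : 2 ≤ 2 ^ (n + 1) :=
  Nat.le_self_pow n.succ_ne_zero 2

theorem s_zero_left (m : ℕ) : s 0 m = (Nat.digits 2 m).sum := by
  rw [s, pow_zero, Nat.div_one]

theorem s_le_s_succ_add_one (n m : ℕ) : s n m ≤ s (n + 1) m + 1 := by
  rw [s, s, pow_succ, ← Nat.div_div_eq_div_mul, sum_digits_eq_mod_add_div one_lt_two (m / 2 ^ n)]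
  lia

theorem s_add_le_add_one (n k l : ℕ) : s n (k + l) ≤ s n k + s n l + 1 := by
  have hadd := sum_digits_add_le one_lt_two (k / 2 ^ n) (l / 2 ^ n)
  have hcarry := sum_digits_succ_le one_lt_two (k / 2 ^ n + l / 2 ^ n)
  rw [s, s, s, Nat.add_div (by positivity)]
  split_ifs <;> lia

theorem s_add_two_pow_succ_sub_one_le (n j : ℕ) : s n (j + (2 ^ (n + 1) - 1)) ≤ s 0 j + 1 := by
  have hdiv : (j + (2 ^ (n + 1) - 1)) / 2 ^ n = j ⌈/⌉ 2 ^ n + 1 := by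
    rw [Nat.ceilDiv_eq_add_pred_div, ← Nat.add_div_right _ (by positivity)]
    congr 1
    have := Nat.two_pow_pos n
    lia
  rw [s, hdiv, s_zero_left]
  exact (sum_digits_succ_le one_lt_two _).trans
    (Nat.add_le_add_right (sum_digits_ceilDiv_pow_le one_lt_two n j) 1)

theorem p_succ_lt (n m : ℕ) : p (n + 1) m < p n m := by
  have hs := s_le_s_succ_add_one n m
  have hpow : (2 : ℤ) ^ (n + 1 + 2) = 2 ^ (n + 2) + 4 * 2 ^ n := by ring
  have : (0 : ℤ) < 2 ^ n := by positivity
  rw [p, p]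
  lia

theorem p_zero_left_lt_p_add (n j : ℕ) : p 0 j < p n (j + (2 ^ (n + 1) - 1)) := by
  have hs := s_add_two_pow_succ_sub_one_le n j
  have hpow : (2 : ℤ) ^ (n + 2) = 2 * 2 ^ (n + 1) := by ring
  rw [p, p]
  push_cast [Nat.one_le_two_pow]
  lia

theorem p_add_lt {n : ℕ} (hn : n ≠ 0) (k l : ℕ) : p n k + p n l < p n (k + l) := by
  have hs := s_add_le_add_one n k l
  have hpow : (2 : ℤ) ^ 3 ≤ 2 ^ (n + 2) := pow_le_pow_right₀ one_le_two (by lia)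
  rw [p, p, p]
  lia

theorem p_add_le (n k l : ℕ) : p n k + p n l ≤ p n (k + l) := by
  rcases eq_or_ne n 0 with rfl | hn
  · have hs := sum_digits_add_le one_lt_two k l
    rw [p, p, p, s_zero_left, s_zero_left, s_zero_left]
    lia
  · exact (p_add_lt hn k l).le

theorem p_add_self_lt (n : ℕ) {k : ℕ} (hk : k ≠ 0) : p n k + p n k < p n (k + k) := by
  rcases eq_or_ne n 0 with rfl | hn
  · have hdouble := sum_digits_eq_mod_add_div one_lt_two (2 * k)
    rw [Nat.mul_mod_right, zero_add, Nat.mul_div_right k two_pos] at hdouble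
    have hpos := sum_digits_pos 2 hk
    rw [p, p, s_zero_left, s_zero_left, ← two_mul k, hdouble]
    lia
  · exact p_add_lt hn k k

/-- The group `2^(-e) ℤ` of rationals that become integers after multiplication by `2^e`. -/
def dyadicLattice (e : ℤ) : AddSubgroup ℚ :=
  (Int.castAddHom ℚ).range.comap (AddMonoidHom.mulLeft ((2 : ℚ) ^ e))

theorem mem_dyadicLattice {e : ℤ} {x : ℚ} :
    x ∈ dyadicLattice e ↔ ∃ z : ℤ, (2 : ℚ) ^ e * x = z :=
  exists_congr fun _ ↦ eq_comm

theorem one_mem_dyadicLattice_zero : (1 : ℚ) ∈ dyadicLattice 0 :=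
  mem_dyadicLattice.2 ⟨1, by simp⟩

theorem mul_mem_dyadicLattice {e f : ℤ} {x y : ℚ} (hx : x ∈ dyadicLattice e)
    (hy : y ∈ dyadicLattice f) : x * y ∈ dyadicLattice (e + f) := by
  obtain ⟨a, ha⟩ := mem_dyadicLattice.1 hx
  obtain ⟨b, hb⟩ := mem_dyadicLattice.1 hy
  refine mem_dyadicLattice.2 ⟨a * b, ?_⟩
  rw [zpow_add₀ two_ne_zero, mul_mul_mul_comm, ha, hb, Int.cast_mul]

theorem two_mul_mem_dyadicLattice_sub_one {e : ℤ} {x : ℚ} :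
    2 * x ∈ dyadicLattice (e - 1) ↔ x ∈ dyadicLattice e := by
  rw [mem_dyadicLattice, mem_dyadicLattice, ← mul_assoc, zpow_sub_one₀ two_ne_zero,
    inv_mul_cancel_right₀ two_ne_zero]

theorem dyadicLattice_mono : Monotone dyadicLattice := by
  refine monotone_int_of_le_succ fun e x hx ↦ ?_
  rw [← two_mul_mem_dyadicLattice_sub_one, add_sub_cancel_right, two_mul]
  exact add_mem hx hx

theorem sum_mem_of_involution {ι G : Type*} [AddCommGroup G] (H : AddSubgroup G) {t : Finset ι}
    {f : ι → G} (σ : ι → ι) (maps : ∀ i ∈ t, σ i ∈ t) (invol : ∀ i ∈ t, σ (σ i) = i)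
    (pair_mem : ∀ i ∈ t, f i + f (σ i) ∈ H) (fixed_mem : ∀ i ∈ t, σ i = i → f i ∈ H) :
    ∑ i ∈ t, f i ∈ H := by
  -- In the quotient `G ⧸ H` the terms cancel in pairs.
  rw [← QuotientAddGroup.eq_zero_iff, ← QuotientAddGroup.mk'_apply, map_sum]
  refine Finset.sum_involution (fun i _ ↦ σ i) (fun i hi ↦ ?_) (fun i hi hne heq ↦ hne ?_)
    maps invol
  · rw [← map_add]
    exact (QuotientAddGroup.eq_zero_iff _).2 (pair_mem i hi)
  · exact (QuotientAddGroup.eq_zero_iff _).2 (fixed_mem i hi heq)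

theorem sum_mul_sub_mem_dyadicLattice {n m a : ℕ} {f : ℕ → ℚ} (ha : a ≠ 0)
    (hf : ∀ k < m, k ≠ 0 → f k ∈ dyadicLattice (p n k)) :
    ∑ k ∈ Finset.Icc a (m - a), f k * f (m - k) ∈ dyadicLattice (p n m - 1) := by
  have hmem {k : ℕ} (hk : k ∈ Finset.Icc a (m - a)) :
      f k * f (m - k) ∈ dyadicLattice (p n k + p n (m - k)) := by
    rw [Finset.mem_Icc] at hk
    exact mul_mem_dyadicLattice (hf k (by lia) (by lia)) (hf (m - k) (by lia) (by lia))
  refine sum_mem_of_involution _ (m - ·) (fun k hk ↦ ?_) (fun k hk ↦ ?_) (fun k hk ↦ ?_)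
    (fun k hk hfix ↦ dyadicLattice_mono ?_ (hmem hk))
  all_goals have hk' := Finset.mem_Icc.1 hk
  · exact Finset.mem_Icc.2 (by lia)
  · lia
  · have hp := p_add_le n k (m - k)
    rw [Nat.add_sub_cancel' (by lia)] at hp
    rw [Nat.sub_sub_self (by lia), mul_comm (f (m - k)), ← two_mul,
      two_mul_mem_dyadicLattice_sub_one]
    exact dyadicLattice_mono hp (hmem hk)
  · have hp := p_add_self_lt n (k := k) (by lia)
    have hm : k + k = m := by lia
    rw [hm] at hp
    rw [hfix]
    lia

/-- The families of coefficients `β(n, m)` of `p_n(ψ(z)) = ∑ β(n, m) z^(2^n - m)`, characterised by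
the Ewing–Schober backward recursion. The truncated subtractions are exact in the range
`2^(n+1) - 1 ≤ m` of the recursion. -/
structure IsFaberFamily (β : ℕ → ℕ → ℚ) : Prop where
  apply_zero : ∀ n, β n 0 = 1
  apply_eq_zero : ∀ n m, 1 ≤ m → m ≤ 2 ^ (n + 1) - 2 → β n m = 0
  backward_rec : ∀ n m, 2 ^ (n + 1) - 1 ≤ m →
    β n m = (1 / 2) * (β (n + 1) m
      - ∑ k ∈ Finset.Icc (2 ^ (n + 1) - 1) (m + 1 - 2 ^ (n + 1)), β n k * β n (m - k)
      - β 0 (m + 1 - 2 ^ (n + 1)))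

namespace IsFaberFamily

variable {β : ℕ → ℕ → ℚ} {n m : ℕ}

theorem two_mul_apply_add (hβ : IsFaberFamily β) (n j : ℕ) :
    2 * β n (j + (2 ^ (n + 1) - 1)) = β (n + 1) (j + (2 ^ (n + 1) - 1))
      - ∑ k ∈ Finset.Icc (2 ^ (n + 1) - 1) j, β n k * β n (j + (2 ^ (n + 1) - 1) - k) - β 0 j := by
  have hj : j + (2 ^ (n + 1) - 1) + 1 - 2 ^ (n + 1) = j := by
    have := two_le_two_pow_succ n
    lia
  rw [hβ.backward_rec n _ (Nat.le_add_left _ _), hj]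
  ring

theorem mem_dyadicLattice_of_succ (hβ : IsFaberFamily β) (hm : m ≠ 0)
    (ih : ∀ k < m, k ≠ 0 → ∀ n, β n k ∈ dyadicLattice (p n k))
    (hsucc : β (n + 1) m ∈ dyadicLattice (p (n + 1) m)) : β n m ∈ dyadicLattice (p n m) := by
  have hpow := two_le_two_pow_succ n
  rcases le_or_gt (2 ^ (n + 1) - 1) m with hge | hlt
  · obtain ⟨j, rfl⟩ := Nat.exists_eq_add_of_le' hge
    have hzero : β 0 j ∈ dyadicLattice (p 0 j) := by
      rcases eq_or_ne j 0 with rfl | hj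
      · simpa [hβ.apply_zero, p, s] using one_mem_dyadicLattice_zero
      · exact ih j (by lia) hj 0
    have hconv := sum_mul_sub_mem_dyadicLattice (a := 2 ^ (n + 1) - 1) (by lia)
      fun k hk hk0 ↦ ih k hk hk0 n
    rw [Nat.add_sub_cancel] at hconv
    rw [← two_mul_mem_dyadicLattice_sub_one, hβ.two_mul_apply_add]
    exact sub_mem (sub_mem (dyadicLattice_mono (Int.le_sub_one_of_lt (p_succ_lt _ _)) hsucc) hconv)
      (dyadicLattice_mono (Int.le_sub_one_of_lt (p_zero_left_lt_p_add n j)) hzero)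
  · rw [hβ.apply_eq_zero n m (by lia) (by lia)]
    exact zero_mem _

theorem mem_dyadicLattice (hβ : IsFaberFamily β) (hm : m ≠ 0) (n : ℕ) :
    β n m ∈ dyadicLattice (p n m) := by
  induction m using Nat.strong_induction_on generalizing n with
  | _ m ih =>
    obtain ⟨N, hnN, hN⟩ : ∃ N, n ≤ N ∧ β N m = 0 := by
      have : n + m + 1 < 2 ^ (n + m + 1) := Nat.lt_two_pow_self
      exact ⟨n + m, by lia, hβ.apply_eq_zero (n + m) m (by lia) (by lia)⟩
    induction hnN using Nat.decreasingInduction with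
    | self => exact hN ▸ zero_mem _
    | of_succ i _ hsucc => exact hβ.mem_dyadicLattice_of_succ hm ih hsucc

end IsFaberFamily

open Finset in
/-- Main theorem: for `β : ℕ → ℕ → ℚ` satisfying the Ewing–Schober backward
recursion and `m ≥ 2^(n+1) - 1`, the rational `2^(p(n,m))·β(n,m)` is an
integer; equivalently, `-ν(β(n,m)) ≤ 2m - 2^(n+2) + 4 - s(n,m)` for
non-zero `β(n,m)`, where `ν` is the 2-adic valuation. -/
theorem two_pow_p_beta_int (β : ℕ → ℕ → ℚ)
    (hβ0 : ∀ n, β n 0 = 1)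
    (hβzero : ∀ n m, 1 ≤ m → m ≤ 2 ^ (n + 1) - 2 → β n m = 0)
    (hβrec : ∀ n m, 2 ^ (n + 1) - 1 ≤ m →
      β n m = (1 / 2) * (β (n + 1) m
        - ∑ k ∈ Icc (2 ^ (n + 1) - 1) (m + 1 - 2 ^ (n + 1)), β n k * β n (m - k)
        - β 0 (m + 1 - 2 ^ (n + 1))))
    (n m : ℕ) (hm : 2 ^ (n + 1) - 1 ≤ m) :
    ∃ z : ℤ, (2 : ℚ) ^ (p n m) * β n m = (z : ℚ) := by
  have hm0 : m ≠ 0 := by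
    have := two_le_two_pow_succ n
    lia
  have hβ : IsFaberFamily β := ⟨hβ0, hβzero, hβrec⟩
  exact mem_dyadicLattice.1 (hβ.mem_dyadicLattice hm0 n)
end

section
/- For every integer n ≥ 2, β(n, 2^{n+2} + 4) = −(1/2)·β(0, 2^{n+1} + 5). -/
/-!
Write `b j = β 0 j` and `N = 2 ^ (n + 1)`. For small `j`, the recursion gives
`β n (N - 1 + j) = -b j / 2`: the term at level `n + 1` vanishes and the convolution is empty.
One block further, the convolution only involves these values, so it is a quarter of a coefficient
of the square of `∑ b j z ^ j`. The recursion at level `0` expresses that coefficient through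
`β 1`, and altogether
`β n (2 * N - 1 + j) = -(b j + β 1 (j + 1)) / 8 - b (N + j) / 2`.
For `j = 5` the correction term vanishes: since `b 1 = -1 / 2`, the products with `b 1` cancel
the linear term of the recursion at level `0`, which yields `b 3 = -1 / 4` and then
`b 5 = β 1 6 = 0`.
-/

open Finset

/-- The Ewing–Schober coefficients: `β n m` is the coefficient of `z ^ (2 ^ n - m)` in the `n`-th
Faber polynomial of the Mandelbrot set, composed with the exterior conformal map. The family is
characterised by its backward recursion, which makes sense over any field where `2` is invertible.
The upper index `m - 2 ^ (n + 1) + 1` is written `m + 1 - 2 ^ (n + 1)`, so that the subtraction of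
natural numbers is never truncated. -/
structure IsFaberCoeff {K : Type*} [Field K] (β : ℕ → ℕ → K) : Prop where
  zero_right : ∀ n, β n 0 = 1
  eq_zero : ∀ n m, 1 ≤ m → m ≤ 2 ^ (n + 1) - 2 → β n m = 0
  backward_rec : ∀ n m, 2 ^ (n + 1) - 1 ≤ m →
    β n m = (1 / 2) * (β (n + 1) m
      - ∑ k ∈ Icc (2 ^ (n + 1) - 1) (m + 1 - 2 ^ (n + 1)), β n k * β n (m - k)
      - β 0 (m + 1 - 2 ^ (n + 1)))

namespace IsFaberCoeff

variable {K : Type*} [Field K] {β : ℕ → ℕ → K} {n m j : ℕ}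

theorem apply_two_pow_sub_one_add (hβ : IsFaberCoeff β) (hj : j + 2 ≤ 2 ^ (n + 1)) :
    β n (2 ^ (n + 1) - 1 + j) = -(1 / 2) * β 0 j := by
  have next_level : β (n + 1) (2 ^ (n + 1) - 1 + j) = 0 :=
    hβ.eq_zero _ _ (by omega) (by rw [pow_succ 2 (n + 1)]; omega)
  rw [hβ.backward_rec n _ (by omega), next_level, Icc_eq_empty (by omega), sum_empty,
    show 2 ^ (n + 1) - 1 + j + 1 - 2 ^ (n + 1) = j by omega]
  ring

theorem sum_Icc_mul_eq_sum_antidiagonal (hβ : IsFaberCoeff β) (hj : j + 2 ≤ 2 ^ (n + 1)) :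
    ∑ k ∈ Icc (2 ^ (n + 1) - 1) (2 ^ (n + 1) - 1 + j), β n k * β n (2 ^ (n + 2) - 2 + j - k) =
      (1 / 2) ^ 2 * ∑ p ∈ antidiagonal j, β 0 p.1 * β 0 p.2 := by
  rw [← Ico_add_one_right_eq_Icc, sum_Ico_eq_sum_range, Nat.sum_antidiagonal_eq_sum_range_succ_mk,
    mul_sum, show 2 ^ (n + 1) - 1 + j + 1 - (2 ^ (n + 1) - 1) = j + 1 by omega]
  refine sum_congr rfl fun i hi ↦ ?_
  have hij : i ≤ j := mem_range_succ_iff.mp hi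
  have complement :
      2 ^ (n + 2) - 2 + j - (2 ^ (n + 1) - 1 + i) = 2 ^ (n + 1) - 1 + (j - i) := by
    rw [pow_succ 2 (n + 1)]
    omega
  rw [complement, hβ.apply_two_pow_sub_one_add (by omega),
    hβ.apply_two_pow_sub_one_add (by omega)]
  ring

theorem apply_two_pow_add_two_sub_two_add (hβ : IsFaberCoeff β) (hj : j + 2 ≤ 2 ^ (n + 1)) :
    β n (2 ^ (n + 2) - 2 + j) = (1 / 2) * (β (n + 1) (2 ^ (n + 2) - 2 + j)
      - (1 / 2) ^ 2 * ∑ p ∈ antidiagonal j, β 0 p.1 * β 0 p.2 - β 0 (2 ^ (n + 1) - 1 + j)) := by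
  have pow_eq : 2 ^ (n + 2) = 2 ^ (n + 1) * 2 := pow_succ 2 (n + 1)
  rw [hβ.backward_rec n _ (by omega),
    show 2 ^ (n + 2) - 2 + j + 1 - 2 ^ (n + 1) = 2 ^ (n + 1) - 1 + j by omega,
    hβ.sum_Icc_mul_eq_sum_antidiagonal hj]

theorem apply_two_pow_add_two_sub_two (hβ : IsFaberCoeff β) :
    β n (2 ^ (n + 2) - 2) = -(1 / 2) ^ 3 - (1 / 2) * β 0 (2 ^ (n + 1) - 1) := by
  have two_le : 2 ≤ 2 ^ (n + 1) := Nat.le_self_pow n.succ_ne_zero 2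
  have next_level : β (n + 1) (2 ^ (n + 2) - 2) = 0 :=
    hβ.eq_zero _ _ (by rw [pow_succ 2 (n + 1)]; omega) le_rfl
  have block := hβ.apply_two_pow_add_two_sub_two_add (n := n) (j := 0) (by omega)
  simp only [add_zero, Nat.antidiagonal_zero, sum_singleton, hβ.zero_right, next_level] at block
  rw [block]
  ring

theorem sum_antidiagonal_mul_self (hβ : IsFaberCoeff β) (hm : 1 ≤ m) :
    ∑ p ∈ antidiagonal m, β n p.1 * β n p.2 =
      2 * β n m +
        ∑ k ∈ Icc (2 ^ (n + 1) - 1) (m + 1 - 2 ^ (n + 1)), β n k * β n (m - k) := by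
  obtain ⟨m, rfl⟩ := Nat.exists_eq_add_of_le' hm
  have two_le : 2 ≤ 2 ^ (n + 1) := Nat.le_self_pow n.succ_ne_zero 2
  have middle : ∑ k ∈ Icc (2 ^ (n + 1) - 1) (m + 1 + 1 - 2 ^ (n + 1)), β n k * β n (m + 1 - k) =
      ∑ k ∈ Ico 1 (m + 1), β n k * β n (m + 1 - k) := by
    refine sum_subset (fun k hk ↦ ?_) fun k hk hk' ↦ ?_
    · simp only [mem_Icc, mem_Ico] at hk ⊢
      omega
    · simp only [mem_Icc, mem_Ico] at hk hk'
      obtain small | large : k ≤ 2 ^ (n + 1) - 2 ∨ m + 1 - k ≤ 2 ^ (n + 1) - 2 := by omega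
      · rw [hβ.eq_zero n k hk.1 small, zero_mul]
      · rw [hβ.eq_zero n (m + 1 - k) (by omega) large, mul_zero]
  rw [middle, Nat.sum_antidiagonal_eq_sum_range_succ_mk, sum_range_succ, range_eq_Ico,
    sum_eq_sum_Ico_succ_bot m.succ_pos, Nat.sub_zero, Nat.sub_self, hβ.zero_right]
  ring

theorem apply_zero_one (hβ : IsFaberCoeff β) : β 0 1 = -(1 / 2) := by
  simpa [hβ.zero_right] using hβ.apply_two_pow_sub_one_add (n := 0) (j := 0) (by norm_num)

variable [NeZero (2 : K)]

theorem succ_apply_eq_sum_antidiagonal_add (hβ : IsFaberCoeff β) (hm : 2 ^ (n + 1) - 1 ≤ m) :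
    β (n + 1) m = ∑ p ∈ antidiagonal m, β n p.1 * β n p.2 + β 0 (m + 1 - 2 ^ (n + 1)) := by
  have two_le : 2 ≤ 2 ^ (n + 1) := Nat.le_self_pow n.succ_ne_zero 2
  have doubled := congrArg (2 * ·) (hβ.backward_rec n m hm)
  simp only [← mul_assoc, mul_one_div_cancel (two_ne_zero' K), one_mul] at doubled
  rw [hβ.sum_antidiagonal_mul_self (by omega), doubled]
  ring

theorem apply_two_pow_add_two_sub_one_add (hβ : IsFaberCoeff β) (hj : j + 3 ≤ 2 ^ (n + 1)) :
    β n (2 ^ (n + 2) - 1 + j) =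
      -(1 / 2) ^ 3 * (β 0 j + β 1 (j + 1)) - (1 / 2) * β 0 (2 ^ (n + 1) + j) := by
  have pow_eq : 2 ^ (n + 2) = 2 ^ (n + 1) * 2 := pow_succ 2 (n + 1)
  have block := hβ.apply_two_pow_add_two_sub_two_add (n := n) (j := j + 1) (by omega)
  have next_level : β (n + 1) (2 ^ (n + 2) - 1 + j) = -(1 / 2) * β 0 j :=
    hβ.apply_two_pow_sub_one_add (n := n + 1) (by rw [pow_succ 2 (n + 1)]; omega)
  have square : β 1 (j + 1) = ∑ p ∈ antidiagonal (j + 1), β 0 p.1 * β 0 p.2 + β 0 j :=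
    hβ.succ_apply_eq_sum_antidiagonal_add (n := 0) (by simp)
  rw [show 2 ^ (n + 2) - 2 + (j + 1) = 2 ^ (n + 2) - 1 + j by omega,
    show 2 ^ (n + 1) - 1 + (j + 1) = 2 ^ (n + 1) + j by omega, next_level] at block
  rw [block, square]
  linear_combination (1 / 2) ^ 2 * β 0 j * add_halves (1 : K)

theorem apply_one_add_three (hβ : IsFaberCoeff β) :
    β 1 (m + 3) = 2 * β 0 (m + 3) + ∑ k ∈ Ico 2 (m + 2), β 0 k * β 0 (m + 3 - k) := by
  have square : β 1 (m + 3) =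
      2 * β 0 (m + 3) + ∑ k ∈ Icc 1 (m + 2), β 0 k * β 0 (m + 3 - k) + β 0 (m + 2) := by
    rw [hβ.succ_apply_eq_sum_antidiagonal_add (n := 0) (by simp),
      hβ.sum_antidiagonal_mul_self (by simp)]
    rfl
  have ends : ∑ k ∈ Icc 1 (m + 2), β 0 k * β 0 (m + 3 - k) =
      ∑ k ∈ Ico 2 (m + 2), β 0 k * β 0 (m + 3 - k) - β 0 (m + 2) := by
    rw [← Ico_add_one_right_eq_Icc, sum_Ico_succ_top (by omega),
      sum_eq_sum_Ico_succ_bot (by omega), show m + 3 - 1 = m + 2 by omega,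
      show m + 3 - (m + 2) = 1 by omega, hβ.apply_zero_one]
    linear_combination -β 0 (m + 2) * add_halves (1 : K)
  rw [square, ends]
  ring

theorem apply_zero_three (hβ : IsFaberCoeff β) : β 0 3 = -(1 / 2) ^ 2 := by
  have doubled : -(1 / 2) = 2 * β 0 3 := by
    calc -(1 / 2) = -(1 / 2) * β 0 0 := by rw [hβ.zero_right, mul_one]
      _ = β 1 3 := (hβ.apply_two_pow_sub_one_add (n := 1) (j := 0) (by norm_num)).symm
      _ = 2 * β 0 3 := by simpa using hβ.apply_one_add_three (m := 0)
  linear_combination -(1 / 2) * doubled - β 0 3 * add_halves (1 : K)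

theorem apply_zero_five (hβ : IsFaberCoeff β) : β 0 5 = 0 := by
  have doubled : -(1 / 2) * β 0 2 = 2 * β 0 5 + (β 0 2 * β 0 3 + β 0 3 * β 0 2) := by
    calc -(1 / 2) * β 0 2 = β 1 5 :=
          (hβ.apply_two_pow_sub_one_add (n := 1) (j := 2) (by norm_num)).symm
      _ = 2 * β 0 5 + (β 0 2 * β 0 3 + β 0 3 * β 0 2) := by
        simpa [sum_Ico_succ_top] using hβ.apply_one_add_three (m := 2)
  rw [hβ.apply_zero_three] at doubled
  refine (mul_eq_zero_iff_left (two_ne_zero' K)).mp ?_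
  linear_combination -doubled + (1 / 2) * β 0 2 * add_halves (1 : K)

theorem apply_one_six (hβ : IsFaberCoeff β) : β 1 6 = 0 := by
  have level_one : β 1 6 = -(1 / 2) ^ 3 - (1 / 2) * β 0 3 :=
    hβ.apply_two_pow_add_two_sub_two (n := 1)
  rw [level_one, hβ.apply_zero_three]
  ring

end IsFaberCoeff

theorem beta_special_five_general {K : Type*} [Field K] [NeZero (2 : K)] {β : ℕ → ℕ → K}
    (hβ : IsFaberCoeff β) {n : ℕ} (hn : 2 ≤ n) :
    β n (2 ^ (n + 2) + 4) = -(1 / 2) * β 0 (2 ^ (n + 1) + 5) := by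
  have eight_le : 2 ^ 3 ≤ 2 ^ (n + 1) := Nat.pow_le_pow_right two_pos (by omega)
  have block := hβ.apply_two_pow_add_two_sub_one_add (n := n) (j := 5) eight_le
  rw [hβ.apply_zero_five, hβ.apply_one_six,
    show 2 ^ (n + 2) - 1 + 5 = 2 ^ (n + 2) + 4 by rw [pow_succ 2 (n + 1)]; omega]
    at block
  rw [block]
  ring

open Finset in
/-- For `β` satisfying the Ewing–Schober backward recursion and every `n ≥ 2`,
`β(n, 2^(n+2) + 4) = -(1/2)·β(0, 2^(n+1) + 5)`. -/
theorem beta_special_five (β : ℕ → ℕ → ℚ)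
    (hβ0 : ∀ n, β n 0 = 1)
    (hβzero : ∀ n m, 1 ≤ m → m ≤ 2 ^ (n + 1) - 2 → β n m = 0)
    (hβrec : ∀ n m, 2 ^ (n + 1) - 1 ≤ m →
      β n m = (1 / 2) * (β (n + 1) m
        - ∑ k ∈ Icc (2 ^ (n + 1) - 1) (m + 1 - 2 ^ (n + 1)), β n k * β n (m - k)
        - β 0 (m + 1 - 2 ^ (n + 1)))) (n : ℕ) (hn : 2 ≤ n) :
    β n (2 ^ (n + 2) + 4) = -(1 / 2) * β 0 (2 ^ (n + 1) + 5) :=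
  beta_special_five_general ⟨hβ0, hβzero, hβrec⟩ hn
end
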